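/- Let q > 1 and r ∈ ℝ. Then there exist r₀ ∈ (0,1), C > 0, and a twice continuously differentiable positive function u : (0,r₀) → ℝ such that u''(t) + u'(t)/t + u(t)^r · e^{u(t)^q} = 0 for all t ∈ (0,r₀), u(t) → ∞ as t → 0⁺, and for all t ∈ (0,r₀): | u(t) − ( −2 log t − ((2q+r−1)/q)·log(−2 log t) + log(4(q−1)/q²) )^{1/q} | ≤ C · log(−log t) / (−log t)^{2 − 1/q}. -/

import Mathlib

open Filter

/-!
With `s = -log t` the equation becomes `w'' = -exp (-2 s) f(w)`. Take a second variable `x` with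
`s = phase a b c x = x² / 2 + b log x - (log c) / 2 + a / (2 x²)`, which makes the leading term of
the solution the pure power `x ^ (2 / q)`, and write `W = x ^ (2 / q) + √P v` with `P = ds/dx`.
This Liouville substitution removes the first-order term and leaves an oscillator
`v'' + c q v = x ^ α Ψ(x⁻², x ^ (-α) v)` with `α = 2 / q - 5 / 2`, where `b` and `c` are dictated by
the leading balance and the extra constant `a` is chosen so that `Ψ` vanishes to second order at the
origin. The Duhamel integral from infinity is then a contraction on `|v| ≤ x ^ (α - 2)`, whence
`W = x ^ (2 / q) (1 + O(x⁻⁴))`. On the other hand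
`2 s - b log (2 s) + log c = x² (1 + O(x⁻⁴ log x))`, and raising this to the power `1 / q` gives the
expansion, the logarithm in the error coming from the comparison of `x²` with `2 s`.
-/

open scoped Topology

section WeightedBall

open scoped BoundedContinuousFunction

variable {α : Type*} [TopologicalSpace α] {ρ : α → ℝ} {s : Set α}

/-- The functions that are continuous on `s` and bounded there by the weight `ρ`: the closed unit
ball of the weighted supremum norm. -/
def weightedBall (ρ : α → ℝ) (s : Set α) : Set (α → ℝ) :=
  {v | ContinuousOn v s ∧ ∀ x ∈ s, |v x| ≤ ρ x}

theorem exists_eqOn_mul_of_mem_weightedBall (hρ : ContinuousOn ρ s) (hρpos : ∀ x ∈ s, 0 < ρ x)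
    {v : α → ℝ} (hv : v ∈ weightedBall ρ s) :
    ∃ b : s →ᵇ ℝ, ‖b‖ ≤ 1 ∧ ∀ x : s, ρ x * b x = v x := by
  have hcont : Continuous fun x : s ↦ v x / ρ x :=
    continuousOn_iff_continuous_domRestrict.1 (hv.1.div hρ fun x hx ↦ (hρpos x hx).ne')
  have hbound (x : s) : |v x / ρ x| ≤ 1 := by
    rw [abs_div, abs_of_pos (hρpos x x.2), div_le_one (hρpos x x.2)]
    exact hv.2 x x.2
  exact ⟨.ofNormedAddCommGroup _ hcont 1 hbound,
    BoundedContinuousFunction.norm_ofNormedAddCommGroup_le hcont zero_le_one hbound,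
    fun x ↦ mul_div_cancel₀ _ (hρpos x x.2).ne'⟩

theorem exists_mem_weightedBall_eq_mul (hρ : ContinuousOn ρ s) (hρpos : ∀ x ∈ s, 0 < ρ x)
    {b : s →ᵇ ℝ} (hb : ‖b‖ ≤ 1) : ∃ v ∈ weightedBall ρ s, ∀ x : s, v x = ρ x * b x := by
  have hext (x : s) : Function.extend Subtype.val (fun x : s ↦ ρ x * b x) 0 x = ρ x * b x :=
    Subtype.val_injective.extend_apply _ _ x
  refine ⟨_, ⟨?_, fun x hx ↦ ?_⟩, hext⟩
  · rw [continuousOn_iff_continuous_domRestrict] at hρ ⊢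
    exact (hρ.mul b.continuous).congr fun x ↦ (hext x).symm
  · rw [hext ⟨x, hx⟩, abs_mul, abs_of_pos (hρpos x hx)]
    exact mul_le_of_le_one_right (hρpos x hx).le ((b.norm_coe_le_norm _).trans hb)

theorem exists_eqOn_of_contracts_weightedBall (hρ : ContinuousOn ρ s)
    (hρpos : ∀ x ∈ s, 0 < ρ x) {T : (α → ℝ) → α → ℝ}
    (hmaps : Set.MapsTo T (weightedBall ρ s) (weightedBall ρ s))
    (hcontr : ∀ v ∈ weightedBall ρ s, ∀ w ∈ weightedBall ρ s, ∀ k, 0 ≤ k →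
      (∀ x ∈ s, |v x - w x| ≤ k * ρ x) → ∀ x ∈ s, |T v x - T w x| ≤ k / 2 * ρ x) :
    ∃ v ∈ weightedBall ρ s, Set.EqOn (T v) v s := by
  let B := Metric.closedBall (0 : s →ᵇ ℝ) 1
  have : Nonempty B := ⟨⟨0, by simp [B]⟩⟩
  have : CompleteSpace B := Metric.isClosed_closedBall.completeSpace_coe
  have hB (b : B) : ‖b.1‖ ≤ 1 := mem_closedBall_zero_iff.1 b.2
  choose V hVmem hV using fun b : B ↦ exists_mem_weightedBall_eq_mul hρ hρpos (hB b)
  choose U hUmem hU using fun b : B ↦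
    exists_eqOn_mul_of_mem_weightedBall hρ hρpos (hmaps (hVmem b))
  let Φ (b : B) : B := ⟨U b, mem_closedBall_zero_iff.2 (hUmem b)⟩
  have hΦ : ContractingWith (1 / 2) Φ := by
    refine ⟨by norm_num, LipschitzWith.of_dist_le_mul fun b b' ↦
      (BoundedContinuousFunction.dist_le (by positivity)).2 fun x ↦ ?_⟩
    refine le_of_mul_le_mul_left ?_ (hρpos x x.2)
    have hVsub (y : α) (hy : y ∈ s) : |V b y - V b' y| ≤ dist b b' * ρ y := by
      rw [hV b ⟨y, hy⟩, hV b' ⟨y, hy⟩, ← mul_sub, abs_mul, abs_of_pos (hρpos y hy), mul_comm]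
      gcongr
      · exact (hρpos y hy).le
      · exact BoundedContinuousFunction.dist_coe_le_dist (f := b.1) (g := b'.1) _
    calc
      ρ x * dist (U b x) (U b' x) = |T (V b) x - T (V b') x| := by
        rw [← hU, ← hU, ← mul_sub, abs_mul, abs_of_pos (hρpos x x.2), Real.dist_eq]
      _ ≤ dist b b' / 2 * ρ x :=
        hcontr _ (hVmem b) _ (hVmem b') _ dist_nonneg hVsub x x.2
      _ = ρ x * ((1 / 2 : NNReal) * dist b b') := by push_cast; ring
  obtain ⟨b, hb⟩ : ∃ b, Φ b = b := ⟨_, hΦ.fixedPoint_isFixedPt⟩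
  refine ⟨V b, hVmem b, fun x hx ↦ ?_⟩
  rw [← hU b ⟨x, hx⟩, hV b ⟨x, hx⟩]
  exact congrArg (fun c : B ↦ ρ x * c.1 ⟨x, hx⟩) hb

end WeightedBall

section Oscillator

open Set MeasureTheory

theorem hasDerivAt_integral_Ioi {E : Type*} [NormedAddCommGroup E] [NormedSpace ℝ E]
    [CompleteSpace E] {f : ℝ → E} {a x : ℝ} (hf : ContinuousOn f (Ioi a))
    (hInt : IntegrableOn f (Ioi a)) (hx : a < x) :
    HasDerivAt (fun y ↦ ∫ t in Ioi y, f t) (-f x) x := by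
  have hsplit : (fun y ↦ ∫ t in Ioi y, f t) =ᶠ[𝓝 x]
      fun y ↦ (∫ t in Ioi x, f t) - ∫ t in x..y, f t := by
    filter_upwards [lt_mem_nhds hx] with y hy
    rw [← intervalIntegral.integral_interval_add_Ioi
      (hInt.mono_set (Ioi_subset_Ioi hx.le)) (hInt.mono_set (Ioi_subset_Ioi hy.le)),
      add_sub_cancel_left]
  have hderiv : HasDerivAt (fun y ↦ ∫ t in x..y, f t) (f x) x :=
    intervalIntegral.integral_hasDerivAt_right (by simp)
      (hf.stronglyMeasurableAtFilter isOpen_Ioi x hx) (hf.continuousAt (Ioi_mem_nhds hx))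
  exact (hderiv.const_sub _).congr_of_eventuallyEq hsplit

/-- The solution of `v'' + ω² v = φ` that vanishes at infinity, given by Duhamel's formula with
the initial time at infinity. -/
noncomputable def duhamel (ω : ℝ) (φ : ℝ → ℝ) (x : ℝ) : ℝ :=
  ω⁻¹ * ∫ t in Ioi x, Real.sin (ω * (t - x)) * φ t

/-- The derivative of `duhamel ω φ`. -/
noncomputable def duhamelDeriv (ω : ℝ) (φ : ℝ → ℝ) (x : ℝ) : ℝ :=
  -∫ t in Ioi x, Real.cos (ω * (t - x)) * φ t

variable {ω a x : ℝ} {φ χ : ℝ → ℝ}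

theorem integrableOn_sin_mul (θ : ℝ) {s : Set ℝ} (hφ : IntegrableOn φ s) :
    IntegrableOn (fun t ↦ Real.sin (ω * (t - x) + θ) * φ t) s :=
  hφ.bdd_mul (c := 1) (by fun_prop) (ae_of_all _ fun _ ↦ Real.abs_sin_le_one _)

theorem integral_sin_sub_mul (θ : ℝ) (hφ : IntegrableOn φ (Ioi x)) :
    ∫ t in Ioi x, Real.sin (ω * (t - x) + θ) * φ t =
      Real.cos (ω * x - θ) * (∫ t in Ioi x, Real.sin (ω * t) * φ t) -
        Real.sin (ω * x - θ) * ∫ t in Ioi x, Real.cos (ω * t) * φ t := by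
  have hsin : IntegrableOn (fun t ↦ Real.sin (ω * t) * φ t) (Ioi x) := by
    simpa using integrableOn_sin_mul (x := 0) 0 hφ
  have hcos : IntegrableOn (fun t ↦ Real.cos (ω * t) * φ t) (Ioi x) := by
    simpa [Real.sin_add_pi_div_two] using integrableOn_sin_mul (x := 0) (Real.pi / 2) hφ
  rw [← integral_const_mul, ← integral_const_mul,
    ← integral_sub (hsin.const_mul _) (hcos.const_mul _)]
  refine integral_congr_ae (ae_of_all _ fun t ↦ ?_)
  beta_reduce
  rw [show ω * (t - x) + θ = ω * t - (ω * x - θ) by ring, Real.sin_sub]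
  ring

theorem hasDerivAt_integral_sin_sub_mul (θ : ℝ) (hφ : ContinuousOn φ (Ioi a))
    (hInt : IntegrableOn φ (Ioi a)) (hx : a < x) :
    HasDerivAt (fun y ↦ ∫ t in Ioi y, Real.sin (ω * (t - y) + θ) * φ t)
      (-(Real.sin θ * φ x) -
        ω * ∫ t in Ioi x, Real.sin (ω * (t - x) + (θ + Real.pi / 2)) * φ t) x := by
  have hsin := hasDerivAt_integral_Ioi (f := fun t ↦ Real.sin (ω * t) * φ t) (by fun_prop)
    (by simpa using integrableOn_sin_mul (x := 0) 0 hInt) hx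
  have hcos := hasDerivAt_integral_Ioi (f := fun t ↦ Real.cos (ω * t) * φ t) (by fun_prop)
    (by simpa [Real.sin_add_pi_div_two] using
      integrableOn_sin_mul (x := 0) (Real.pi / 2) hInt) hx
  have hlin : HasDerivAt (fun y ↦ ω * y - θ) ω x := by
    simpa using ((hasDerivAt_id x).const_mul ω).sub_const θ
  have hexpand : (fun y ↦ ∫ t in Ioi y, Real.sin (ω * (t - y) + θ) * φ t) =ᶠ[𝓝 x] fun y ↦
      Real.cos (ω * y - θ) * (∫ t in Ioi y, Real.sin (ω * t) * φ t) -
        Real.sin (ω * y - θ) * ∫ t in Ioi y, Real.cos (ω * t) * φ t := by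
    filter_upwards [lt_mem_nhds hx] with y hy
    exact integral_sin_sub_mul θ (hInt.mono_set (Ioi_subset_Ioi hy.le))
  refine (((hlin.cos.mul hsin).sub (hlin.sin.mul hcos)).congr_of_eventuallyEq
    hexpand).congr_deriv ?_
  have hθ : Real.sin θ = Real.sin (ω * x) * Real.cos (ω * x - θ) -
      Real.cos (ω * x) * Real.sin (ω * x - θ) := by
    rw [← Real.sin_sub, sub_sub_cancel]
  rw [integral_sin_sub_mul _ (hInt.mono_set (Ioi_subset_Ioi hx.le)), ← sub_sub (ω * x),
    Real.cos_sub_pi_div_two, Real.sin_sub_pi_div_two, hθ]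
  ring

theorem hasDerivAt_duhamel (hω : ω ≠ 0) (hφ : ContinuousOn φ (Ioi a))
    (hInt : IntegrableOn φ (Ioi a)) (hx : a < x) :
    HasDerivAt (duhamel ω φ) (duhamelDeriv ω φ x) x := by
  have h := (hasDerivAt_integral_sin_sub_mul (ω := ω) 0 hφ hInt hx).const_mul ω⁻¹
  simpa [Real.sin_add_pi_div_two, inv_mul_cancel_left₀ hω] using! h

theorem hasDerivAt_duhamelDeriv (hφ : ContinuousOn φ (Ioi a))
    (hInt : IntegrableOn φ (Ioi a)) (hx : a < x) :
    HasDerivAt (duhamelDeriv ω φ) (φ x - ω ^ 2 * duhamel ω φ x) x := by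
  have h := (hasDerivAt_integral_sin_sub_mul (ω := ω) (Real.pi / 2) hφ hInt hx).neg
  simp only [Real.sin_add_pi_div_two, Real.sin_pi_div_two, add_halves, Real.sin_add_pi] at h
  refine h.congr_deriv ?_
  have hsq : ω ^ 2 * ω⁻¹ = ω := by rw [sq, mul_self_mul_inv]
  simp only [neg_mul, integral_neg, duhamel, one_mul, ← mul_assoc, hsq]
  ring

theorem abs_duhamel_le {ε : ℝ → ℝ} (hω : 0 < ω) (hε : IntegrableOn ε (Ioi x))
    (hφ : ∀ t > x, |φ t| ≤ ε t) : |duhamel ω φ x| ≤ ω⁻¹ * ∫ t in Ioi x, ε t := by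
  rw [duhamel, abs_mul, abs_of_pos (inv_pos.2 hω), ← Real.norm_eq_abs]
  gcongr
  refine norm_integral_le_of_norm_le hε ((ae_restrict_mem measurableSet_Ioi).mono fun t ht ↦ ?_)
  rw [norm_mul]
  exact (mul_le_of_le_one_left (norm_nonneg _) (Real.abs_sin_le_one _)).trans (hφ t ht)

theorem duhamel_sub (hφ : IntegrableOn φ (Ioi x)) (hχ : IntegrableOn χ (Ioi x)) :
    duhamel ω φ x - duhamel ω χ x = duhamel ω (φ - χ) x := by
  have hsin {ψ : ℝ → ℝ} (hψ : IntegrableOn ψ (Ioi x)) :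
      IntegrableOn (fun t ↦ Real.sin (ω * (t - x)) * ψ t) (Ioi x) := by
    simpa using integrableOn_sin_mul 0 hψ
  simp only [duhamel, Pi.sub_apply, mul_sub (Real.sin _)]
  rw [integral_sub (hsin hφ) (hsin hχ), mul_sub]

section FixedPoint

variable {F : ℝ → ℝ → ℝ} {ρ ε v : ℝ → ℝ} {ω a : ℝ}

theorem continuousOn_comp_weightedBall
    (hF : ContinuousOn (Function.uncurry F) {p | a < p.1 ∧ |p.2| ≤ ρ p.1})
    (hv : v ∈ weightedBall ρ (Ioi a)) : ContinuousOn (fun t ↦ F t (v t)) (Ioi a) :=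
  hF.comp (f := fun t ↦ (t, v t)) (continuousOn_id.prodMk hv.1) fun t ht ↦ ⟨ht, hv.2 t ht⟩

theorem integrableOn_comp_weightedBall (hε : IntegrableOn ε (Ioi a))
    (hF : ContinuousOn (Function.uncurry F) {p | a < p.1 ∧ |p.2| ≤ ρ p.1})
    (hFε : ∀ t > a, ∀ y, |y| ≤ ρ t → |F t y| ≤ ε t) (hv : v ∈ weightedBall ρ (Ioi a)) :
    IntegrableOn (fun t ↦ F t (v t)) (Ioi a) :=
  hε.mono' ((continuousOn_comp_weightedBall hF hv).aestronglyMeasurable measurableSet_Ioi)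
    ((ae_restrict_mem measurableSet_Ioi).mono fun t ht ↦ hFε t ht _ (hv.2 t ht))

theorem abs_duhamel_le_half_mul {k x : ℝ} (hω : 0 < ω) (hε : IntegrableOn ε (Ioi a))
    (hsmall : ∀ x > a, ∫ t in Ioi x, ε t ≤ ω / 2 * ρ x) (hk : 0 ≤ k)
    (hφ : ∀ t > a, |φ t| ≤ k * ε t) (hx : a < x) : |duhamel ω φ x| ≤ k / 2 * ρ x :=
  calc
    |duhamel ω φ x| ≤ ω⁻¹ * ∫ t in Ioi x, k * ε t :=
      abs_duhamel_le hω ((hε.mono_set (Ioi_subset_Ioi hx.le)).const_mul k)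
        fun t ht ↦ hφ t (hx.trans ht)
    _ = k * (ω⁻¹ * ∫ t in Ioi x, ε t) := by rw [integral_const_mul]; ring
    _ ≤ k * (ω⁻¹ * (ω / 2 * ρ x)) := by gcongr; exact hsmall x hx
    _ = k / 2 * ρ x := by field_simp

theorem exists_oscillator_solution (hω : 0 < ω) (hρ : ContinuousOn ρ (Ioi a))
    (hρpos : ∀ t > a, 0 < ρ t) (hε : IntegrableOn ε (Ioi a))
    (hF : ContinuousOn (Function.uncurry F) {p | a < p.1 ∧ |p.2| ≤ ρ p.1})
    (hFε : ∀ t > a, ∀ y, |y| ≤ ρ t → |F t y| ≤ ε t)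
    (hlip : ∀ t > a, ∀ y z, |y| ≤ ρ t → |z| ≤ ρ t → ρ t * |F t y - F t z| ≤ ε t * |y - z|)
    (hsmall : ∀ x > a, ∫ t in Ioi x, ε t ≤ ω / 2 * ρ x) :
    ∃ v v₁ : ℝ → ℝ, ∀ x > a, HasDerivAt v (v₁ x) x ∧
      HasDerivAt v₁ (F x (v x) - ω ^ 2 * v x) x ∧ |v x| ≤ ρ x := by
  let φ (v : ℝ → ℝ) (t : ℝ) : ℝ := F t (v t)
  have hcont (v) (hv : v ∈ weightedBall ρ (Ioi a)) : ContinuousOn (φ v) (Ioi a) :=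
    continuousOn_comp_weightedBall hF hv
  have hInt (v) (hv : v ∈ weightedBall ρ (Ioi a)) : IntegrableOn (φ v) (Ioi a) :=
    integrableOn_comp_weightedBall hε hF hFε hv
  have hderiv (v) (hv : v ∈ weightedBall ρ (Ioi a)) (x) (hx : x > a) :=
    hasDerivAt_duhamel hω.ne' (hcont v hv) (hInt v hv) hx
  have hmaps : MapsTo (fun v ↦ duhamel ω (φ v)) (weightedBall ρ (Ioi a))
      (weightedBall ρ (Ioi a)) := by
    refine fun v hv ↦ ⟨fun x hx ↦ (hderiv v hv x hx).continuousAt.continuousWithinAt,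
      fun x hx ↦ ?_⟩
    have hle := abs_duhamel_le_half_mul hω hε hsmall zero_le_one
      (fun t ht ↦ by simpa using hFε t ht _ (hv.2 t ht)) hx
    linarith [hρpos x hx]
  have hcontr (v) (hv : v ∈ weightedBall ρ (Ioi a)) (w) (hw : w ∈ weightedBall ρ (Ioi a)) (k)
      (hk : 0 ≤ k) (hvw : ∀ x ∈ Ioi a, |v x - w x| ≤ k * ρ x) (x) (hx : x ∈ Ioi a) :
      |duhamel ω (φ v) x - duhamel ω (φ w) x| ≤ k / 2 * ρ x := by
    have hle := Ioi_subset_Ioi (mem_Ioi.1 hx).le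
    rw [duhamel_sub ((hInt v hv).mono_set hle) ((hInt w hw).mono_set hle)]
    refine abs_duhamel_le_half_mul hω hε hsmall hk (fun t ht ↦ ?_) hx
    refine le_of_mul_le_mul_left ?_ (hρpos t ht)
    have hε0 : 0 ≤ ε t := (abs_nonneg _).trans (hFε t ht _ (hv.2 t ht))
    calc
      ρ t * |φ v t - φ w t| ≤ ε t * |v t - w t| := hlip t ht _ _ (hv.2 t ht) (hw.2 t ht)
      _ ≤ ε t * (k * ρ t) := by gcongr; exact hvw t ht
      _ = ρ t * (k * ε t) := by ring
  obtain ⟨v, hv, hfix⟩ := exists_eqOn_of_contracts_weightedBall hρ hρpos hmaps hcontr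
  refine ⟨duhamel ω (φ v), duhamelDeriv ω (φ v), fun x hx ↦ ⟨hderiv v hv x hx, ?_, ?_⟩⟩
  · have hduhamel := hasDerivAt_duhamelDeriv (ω := ω) (hcont v hv) (hInt v hv) hx
    rwa [show φ v x = F x (duhamel ω (φ v) x) from congrArg (F x) (hfix hx).symm] at hduhamel
  · exact (hmaps hv).2 x hx

end FixedPoint

end Oscillator

section QuadraticRemainder

variable {E G : Type*} [NormedAddCommGroup E] [NormedSpace ℝ E] [NormedAddCommGroup G]
  [NormedSpace ℝ G]

theorem exists_norm_sub_le_mul_norm_sub_of_contDiffAt_two {f : E → G}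
    (hf : ContDiffAt ℝ 2 f 0) (hf' : fderiv ℝ f 0 = 0) :
    ∃ C > 0, ∃ δ > 0, ∀ R < δ, ∀ x ∈ Metric.closedBall (0 : E) R,
      ∀ y ∈ Metric.closedBall (0 : E) R, ‖f x - f y‖ ≤ C * R * ‖x - y‖ := by
  have hO : fderiv ℝ f =O[𝓝 0] fun x ↦ x := by
    simpa [hf'] using ((hf.fderiv_right (m := 1) le_rfl).differentiableAt
      one_ne_zero).isBigO_sub
  obtain ⟨C, hC, hbound⟩ := hO.exists_pos
  obtain ⟨δ, hδ, hball⟩ := Metric.eventually_nhds_iff_ball.1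
    (hbound.bound.and ((hf.eventually (by simp)).mono
      fun x hx ↦ hx.differentiableAt two_ne_zero))
  refine ⟨C, hC, δ, hδ, fun R hR x hx y hy ↦ ?_⟩
  have hmem {z : E} (hz : z ∈ Metric.closedBall (0 : E) R) := hball z
    (Metric.closedBall_subset_ball hR hz)
  refine (convex_closedBall (0 : E) R).norm_image_sub_le_of_norm_fderiv_le
    (fun z hz ↦ (hmem hz).2) (fun z hz ↦ (hmem hz).1.trans ?_) hy hx
  gcongr
  exact mem_closedBall_zero_iff.1 hz

end QuadraticRemainder

theorem fderiv_prod_eq_zero {𝕜 G : Type*} [NontriviallyNormedField 𝕜] [NormedAddCommGroup G]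
    [NormedSpace 𝕜 G] {f : 𝕜 × 𝕜 → G} {p : 𝕜 × 𝕜} (hf : DifferentiableAt 𝕜 f p)
    (h₁ : HasDerivAt (fun x ↦ f (x, p.2)) 0 p.1) (h₂ : HasDerivAt (fun y ↦ f (p.1, y)) 0 p.2) :
    fderiv 𝕜 f p = 0 := by
  refine ContinuousLinearMap.prod_ext (ContinuousLinearMap.ext_ring ?_)
    (ContinuousLinearMap.ext_ring ?_)
  · simpa using (hf.hasFDerivAt.comp_hasDerivAt p.1
      ((hasDerivAt_id p.1).prodMk (hasDerivAt_const p.1 p.2))).unique h₁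
  · simpa using (hf.hasFDerivAt.comp_hasDerivAt p.2
      ((hasDerivAt_const p.2 p.1).prodMk (hasDerivAt_id p.2))).unique h₂

section PerturbedOscillator

open Set MeasureTheory

/-- The perturbation `Ψ`, a function of the small quantities `t⁻²` and `t^(-α) y`, rescaled so as
to be the forcing term of an oscillator with time `t` and position `y`. -/
noncomputable def scaledForce (Ψ : ℝ × ℝ → ℝ) (α t y : ℝ) : ℝ :=
  t ^ α * Ψ ((t ^ 2)⁻¹, t ^ (-α) * y)

variable {Ψ : ℝ × ℝ → ℝ} {α ω t y z C : ℝ}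

theorem norm_inv_sq_rpow_mul_le (ht : 0 < t) (hy : |y| ≤ t ^ (α - 2)) :
    ‖((t ^ 2)⁻¹, t ^ (-α) * y)‖ ≤ (t ^ 2)⁻¹ := by
  refine norm_prod_le_iff.2 ⟨by simp, ?_⟩
  calc
    ‖t ^ (-α) * y‖ = t ^ (-α) * |y| := by
      rw [norm_mul, Real.norm_of_nonneg (by positivity), Real.norm_eq_abs]
    _ ≤ t ^ (-α) * t ^ (α - 2) := by gcongr
    _ = (t ^ 2)⁻¹ := by
      rw [← Real.rpow_add ht, show -α + (α - 2) = -(2 : ℕ) by push_cast; ring,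
        Real.rpow_neg ht.le, Real.rpow_natCast]

theorem rpow_sub_four_eq_mul (ht : 0 < t) (α : ℝ) :
    t ^ (α - 4) = t ^ α * ((t ^ 2)⁻¹ * (t ^ 2)⁻¹) := by
  rw [show α - 4 = α - (4 : ℕ) by norm_num, Real.rpow_sub_natCast ht.ne']
  field_simp

theorem abs_scaledForce_le (ht : 0 < t) (hΨ₀ : Ψ 0 = 0)
    (hlip : ∀ p ∈ Metric.closedBall (0 : ℝ × ℝ) (t ^ 2)⁻¹,
      ∀ p' ∈ Metric.closedBall (0 : ℝ × ℝ) (t ^ 2)⁻¹, ‖Ψ p - Ψ p'‖ ≤ C * (t ^ 2)⁻¹ * ‖p - p'‖)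
    (hC : 0 ≤ C) (hy : |y| ≤ t ^ (α - 2)) : |scaledForce Ψ α t y| ≤ C * t ^ (α - 4) := by
  have hnorm := norm_inv_sq_rpow_mul_le ht hy
  have hle := hlip _ (mem_closedBall_zero_iff.2 hnorm) 0
    (Metric.mem_closedBall_self (by positivity))
  rw [hΨ₀, sub_zero, sub_zero, Real.norm_eq_abs] at hle
  rw [scaledForce, abs_mul, abs_of_pos (Real.rpow_pos_of_pos ht _), rpow_sub_four_eq_mul ht]
  calc
    t ^ α * |Ψ ((t ^ 2)⁻¹, t ^ (-α) * y)| ≤ t ^ α * (C * (t ^ 2)⁻¹ * (t ^ 2)⁻¹) := by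
      gcongr
      exact hle.trans (by gcongr)
    _ = C * (t ^ α * ((t ^ 2)⁻¹ * (t ^ 2)⁻¹)) := by ring

theorem mul_abs_scaledForce_sub_le (ht : 0 < t)
    (hlip : ∀ p ∈ Metric.closedBall (0 : ℝ × ℝ) (t ^ 2)⁻¹,
      ∀ p' ∈ Metric.closedBall (0 : ℝ × ℝ) (t ^ 2)⁻¹, ‖Ψ p - Ψ p'‖ ≤ C * (t ^ 2)⁻¹ * ‖p - p'‖)
    (hy : |y| ≤ t ^ (α - 2)) (hz : |z| ≤ t ^ (α - 2)) :
    t ^ (α - 2) * |scaledForce Ψ α t y - scaledForce Ψ α t z| ≤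
      C * t ^ (α - 4) * |y - z| := by
  have hpos (β : ℝ) : 0 < t ^ β := Real.rpow_pos_of_pos ht β
  have hle := hlip _ (mem_closedBall_zero_iff.2 (norm_inv_sq_rpow_mul_le ht hy)) _
    (mem_closedBall_zero_iff.2 (norm_inv_sq_rpow_mul_le ht hz))
  rw [Prod.mk_sub_mk, sub_self, Prod.norm_mk, norm_zero, max_eq_right (norm_nonneg _),
    ← mul_sub, norm_mul, Real.norm_of_nonneg (hpos _).le, Real.norm_eq_abs,
    Real.norm_eq_abs] at hle
  rw [scaledForce, scaledForce, ← mul_sub, abs_mul, abs_of_pos (hpos _)]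
  calc
    _ ≤ t ^ (α - 2) * (t ^ α * (C * (t ^ 2)⁻¹ * (t ^ (-α) * |y - z|))) := by gcongr
    _ = C * t ^ (α - 4) * |y - z| := by
      rw [rpow_sub_four_eq_mul ht, Real.rpow_neg ht.le, Real.rpow_sub ht, Real.rpow_two]
      have := (hpos α).ne'
      field_simp

theorem continuousOn_uncurry_scaledForce {a δ : ℝ} (ha : 0 < a)
    (hΨ : ContinuousOn Ψ (Metric.ball 0 δ)) (hδ : ∀ t > a, (t ^ 2)⁻¹ < δ) :
    ContinuousOn (Function.uncurry (scaledForce Ψ α)) {p | a < p.1 ∧ |p.2| ≤ p.1 ^ (α - 2)} := by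
  have hfst (p : ℝ × ℝ) (hp : a < p.1 ∧ |p.2| ≤ p.1 ^ (α - 2)) : p.1 ≠ 0 := (ha.trans hp.1).ne'
  have hpow (β : ℝ) : ContinuousOn (fun p : ℝ × ℝ ↦ p.1 ^ β)
      {p | a < p.1 ∧ |p.2| ≤ p.1 ^ (α - 2)} :=
    continuousOn_fst.rpow_const fun p hp ↦ .inl (hfst p hp)
  refine (hpow α).mul (hΨ.comp (f := fun p : ℝ × ℝ ↦ ((p.1 ^ 2)⁻¹, p.1 ^ (-α) * p.2))
    (((continuousOn_fst.pow 2).inv₀ fun p hp ↦ pow_ne_zero 2 (hfst p hp)).prodMk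
      ((hpow _).mul continuousOn_snd)) fun p hp ↦ ?_)
  exact mem_ball_zero_iff.2
    ((norm_inv_sq_rpow_mul_le (ha.trans hp.1) hp.2).trans_lt (hδ p.1 hp.1))

theorem integral_Ioi_const_mul_rpow_le {x : ℝ} (hω : 0 < ω) (hα : α < 3) (hx : 0 < x)
    (hCx : 2 * C / (ω * (3 - α)) ≤ x) :
    ∫ t in Ioi x, C * t ^ (α - 4) ≤ ω / 2 * x ^ (α - 2) := by
  have hα' : 0 < 3 - α := sub_pos.2 hα
  rw [integral_const_mul, integral_Ioi_rpow_of_lt (by linarith) hx,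
    show α - 4 + 1 = -(3 - α) by ring, neg_div_neg_eq, show α - 2 = -(3 - α) + 1 by ring,
    Real.rpow_add_one hx.ne']
  rw [div_le_iff₀ (by positivity)] at hCx
  rw [← mul_div_assoc, div_le_iff₀ hα']
  nlinarith [Real.rpow_pos_of_pos hx (-(3 - α))]

theorem exists_perturbed_oscillator_solution (hω : 0 < ω) (hα : α < 3)
    (hΨ : ContDiffAt ℝ 2 Ψ 0) (hΨ₀ : Ψ 0 = 0) (hΨ' : fderiv ℝ Ψ 0 = 0) :
    ∃ v v₁ : ℝ → ℝ, ∀ᶠ x in atTop, HasDerivAt v (v₁ x) x ∧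
      HasDerivAt v₁ (scaledForce Ψ α x (v x) - ω ^ 2 * v x) x ∧ |v x| ≤ x ^ (α - 2) := by
  obtain ⟨C, hC, δ, hδ, hlip⟩ := exists_norm_sub_le_mul_norm_sub_of_contDiffAt_two hΨ hΨ'
  obtain ⟨δ', hδ', hcont⟩ := Metric.eventually_nhds_iff_ball.1
    ((hΨ.eventually (by simp)).mono fun p hp ↦ hp.continuousAt)
  have hinv : Tendsto (fun x : ℝ ↦ (x ^ 2)⁻¹) atTop (𝓝 0) :=
    tendsto_inv_atTop_zero.comp (tendsto_pow_atTop two_ne_zero)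
  have hlarge : ∀ᶠ x in atTop, (x ^ 2)⁻¹ < δ ∧ (x ^ 2)⁻¹ < δ' ∧ 2 * C / (ω * (3 - α)) ≤ x :=
    (hinv.eventually_lt_const hδ).and
      ((hinv.eventually_lt_const hδ').and (eventually_ge_atTop _))
  obtain ⟨a, ha, ha₀⟩ :=
    (eventually_forall_ge_atTop.2 hlarge |>.and (eventually_gt_atTop 0)).exists
  obtain ⟨v, v₁, hv⟩ := exists_oscillator_solution (a := a) (ρ := fun t ↦ t ^ (α - 2))
    (ε := fun t ↦ C * t ^ (α - 4)) hω
    (continuousOn_id.rpow_const fun t ht ↦ .inl (ha₀.trans ht).ne')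
    (fun t ht ↦ Real.rpow_pos_of_pos (ha₀.trans ht) _)
    ((integrableOn_Ioi_rpow_of_lt (by linarith) ha₀).const_mul C)
    (continuousOn_uncurry_scaledForce ha₀ (fun p hp ↦ (hcont p hp).continuousWithinAt)
      fun t ht ↦ (ha t (le_of_lt ht)).2.1)
    (fun t ht y ↦ abs_scaledForce_le (ha₀.trans ht) hΨ₀ (hlip _ (ha t (le_of_lt ht)).1) hC.le)
    (fun t ht y z ↦ mul_abs_scaledForce_sub_le (ha₀.trans ht) (hlip _ (ha t (le_of_lt ht)).1))
    (fun x hx ↦ integral_Ioi_const_mul_rpow_le hω hα (ha₀.trans hx) (ha x (le_of_lt hx)).2.2)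
  exact ⟨v, v₁, (eventually_gt_atTop a).mono hv⟩

end PerturbedOscillator

theorem hasDerivAt_add_sqrt_mul {A P v : ℝ → ℝ} {A' P' v' x : ℝ} (hA : HasDerivAt A A' x)
    (hP : HasDerivAt P P' x) (hv : HasDerivAt v v' x) (hP₀ : P x ≠ 0) :
    HasDerivAt (fun x ↦ A x + √(P x) * v x)
      (A' + (P' / (2 * √(P x)) * v x + √(P x) * v')) x :=
  hA.add ((hP.sqrt hP₀).mul hv)

-- The factor `√P` is chosen so that `v'` does not occur in the new forcing term.
theorem hasDerivAt_deriv_add_sqrt_mul {A₁ P P₁ v v₁ : ℝ → ℝ} {A₂ P₂ v₂ x : ℝ}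
    (hA : HasDerivAt A₁ A₂ x) (hP : HasDerivAt P (P₁ x) x) (hP₁ : HasDerivAt P₁ P₂ x)
    (hv : HasDerivAt v (v₁ x) x) (hv₁ : HasDerivAt v₁ v₂ x) (hP₀ : 0 < P x) :
    HasDerivAt (fun x ↦ A₁ x + (P₁ x / (2 * √(P x)) * v x + √(P x) * v₁ x))
      (P₁ x / P x * (A₁ x + (P₁ x / (2 * √(P x)) * v x + √(P x) * v₁ x)) +
        (A₂ - P₁ x / P x * A₁ x +
          √(P x) * (v₂ + (P₂ / (2 * P x) - 3 / 4 * (P₁ x / P x) ^ 2) * v x))) x := by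
  have hsqrt : 0 < √(P x) := Real.sqrt_pos.2 hP₀
  have hsq : P x = √(P x) ^ 2 := (Real.sq_sqrt hP₀.le).symm
  refine (hA.add (((hP₁.div ((hP.sqrt hP₀.ne').const_mul 2) (by positivity)).mul hv).add
    ((hP.sqrt hP₀.ne').mul hv₁))).congr_deriv ?_
  simp only [Pi.div_apply]
  generalize √(P x) = g at hsq hsqrt ⊢
  rw [hsq]
  field_simp
  ring

/-- The function `E` with `(1 + p) ^ q = 1 + p * E p`. -/
noncomputable def rpowSlope (q : ℝ) : ℝ → ℝ :=
  dslope (fun p ↦ (1 + p) ^ q) 0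

theorem one_add_rpow_eq (q p : ℝ) : (1 + p) ^ q = 1 + p * rpowSlope q p := by
  have h := sub_smul_dslope (fun p : ℝ ↦ (1 + p) ^ q) 0 p
  simp only [sub_zero, add_zero, Real.one_rpow, smul_eq_mul] at h
  rw [rpowSlope, h, add_sub_cancel]

theorem contDiffAt_rpowSlope (q : ℝ) {n : WithTop ℕ∞} : ContDiffAt ℝ n (rpowSlope q) 0 :=
  AnalyticAt.contDiffAt
    ⟨_, Real.one_add_rpow_hasFPowerSeriesAt_zero.has_fpower_series_dslope_fslope⟩

theorem rpowSlope_zero (q : ℝ) : rpowSlope q 0 = q := by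
  have h : HasDerivAt (fun p : ℝ ↦ (1 + p) ^ q) q 0 := by
    simpa using ((hasDerivAt_id (0 : ℝ)).const_add 1).rpow_const (p := q) (.inl (by norm_num))
  rw [rpowSlope, dslope_same, h.deriv]

section Phase

variable (a b c : ℝ) {x : ℝ}

/-- The change of variables `s = phase a b c x` under which the leading part of the solution
becomes a power of `x`. -/
noncomputable def phase (x : ℝ) : ℝ :=
  x ^ 2 / 2 + b * Real.log x - Real.log c / 2 + a / 2 * (x ^ 2)⁻¹

/-- The first derivative of `phase a b c` is `x * phaseCoeff₁ a b x⁻²`. -/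
def phaseCoeff₁ (z : ℝ) : ℝ := 1 + b * z - a * z ^ 2

/-- The second derivative of `phase a b c` is `phaseCoeff₂ a b x⁻²`. -/
def phaseCoeff₂ (z : ℝ) : ℝ := 1 - b * z + 3 * a * z ^ 2

/-- The third derivative of `phase a b c` is `x⁻¹ * phaseCoeff₃ a b x⁻²`. -/
def phaseCoeff₃ (z : ℝ) : ℝ := 2 * b * z - 12 * a * z ^ 2

theorem hasDerivAt_inv_sq (hx : x ≠ 0) :
    HasDerivAt (fun x : ℝ ↦ (x ^ 2)⁻¹) (-2 * x⁻¹ * (x ^ 2)⁻¹) x := by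
  refine ((hasDerivAt_pow 2 x).inv (pow_ne_zero 2 hx)).congr_deriv ?_
  push_cast
  field_simp

theorem hasDerivAt_phase (hx : x ≠ 0) :
    HasDerivAt (phase a b c) (x * phaseCoeff₁ a b (x ^ 2)⁻¹) x := by
  refine (((((hasDerivAt_pow 2 x).div_const 2).add ((Real.hasDerivAt_log hx).const_mul b)).sub_const
    _).add ((hasDerivAt_inv_sq hx).const_mul (a / 2))).congr_deriv ?_
  rw [phaseCoeff₁]
  field_simp
  ring

theorem hasDerivAt_mul_phaseCoeff₁ (hx : x ≠ 0) :
    HasDerivAt (fun x ↦ x * phaseCoeff₁ a b (x ^ 2)⁻¹) (phaseCoeff₂ a b (x ^ 2)⁻¹) x := by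
  have hz := hasDerivAt_inv_sq hx
  refine ((hasDerivAt_id x).mul (((hz.const_mul b).const_add 1).sub
    ((hz.pow 2).const_mul a))).congr_deriv ?_
  simp only [phaseCoeff₂, id, Pi.sub_apply, Pi.pow_apply, Nat.add_one_sub_one, pow_one]
  field_simp
  ring

theorem hasDerivAt_phaseCoeff₂ (hx : x ≠ 0) :
    HasDerivAt (fun x ↦ phaseCoeff₂ a b (x ^ 2)⁻¹) (x⁻¹ * phaseCoeff₃ a b (x ^ 2)⁻¹) x := by
  have hz := hasDerivAt_inv_sq hx
  refine (((hz.const_mul b).const_sub 1).add ((hz.pow 2).const_mul (3 * a))).congr_deriv ?_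
  simp only [phaseCoeff₃, Nat.add_one_sub_one, pow_one]
  field_simp
  ring

end Phase

section Remainder

variable (a b c q r : ℝ)

/-- The potential created by the Liouville substitution `W = A + √P * v` with `P` the derivative of
`phase a b c`, as a multiple of `z = x⁻²`. -/
noncomputable def liouvillePotential (z : ℝ) : ℝ :=
  phaseCoeff₃ a b z / (2 * phaseCoeff₁ a b z) - 3 / 4 * (phaseCoeff₂ a b z / phaseCoeff₁ a b z) ^ 2

/-- The relative displacement `(W - A) / A` of the profile `W` from its leading term
`A = x ^ (2 / q)`, in terms of `z = x⁻²` and the rescaled unknown `y`. -/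
noncomputable def displacement (p : ℝ × ℝ) : ℝ :=
  √(phaseCoeff₁ a b p.1) * p.1 * p.2

/-- The nonlinearity `W ^ r * exp (W ^ q)` in the variables `z = x⁻²` and `y`, up to the factor
recorded in `nonlinearity_eq_mul_reducedForce`. -/
noncomputable def reducedForce (p : ℝ × ℝ) : ℝ :=
  c * phaseCoeff₁ a b p.1 ^ 2 * Real.exp (-(a * p.1)) * (1 + displacement a b p) ^ r *
    Real.exp (√(phaseCoeff₁ a b p.1) * p.2 * rpowSlope q (displacement a b p))

/-- The function `Ψ` in the equation `v'' + c q v = x ^ α * Ψ (x⁻², x ^ (-α) * v)`, with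
`α = 2 / q - 5 / 2`, for the unknown `v` of the Liouville substitution. -/
noncomputable def remainder (p : ℝ × ℝ) : ℝ :=
  c * q * p.2 - p.1 * liouvillePotential a b p.1 * p.2 -
    (2 / q * (2 / q - 1 - phaseCoeff₂ a b p.1 / phaseCoeff₁ a b p.1) + reducedForce a b c q r p) /
      √(phaseCoeff₁ a b p.1)

theorem phaseCoeff₁_zero : phaseCoeff₁ a b 0 = 1 := by simp [phaseCoeff₁]

variable {n : WithTop ℕ∞}

theorem contDiffAt_phaseCoeff₁_fst :
    ContDiffAt ℝ n (fun p : ℝ × ℝ ↦ phaseCoeff₁ a b p.1) 0 := by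
  unfold phaseCoeff₁
  fun_prop

theorem phaseCoeff₁_fst_ne_zero : phaseCoeff₁ a b (0 : ℝ × ℝ).1 ≠ 0 := by
  simp [phaseCoeff₁_zero]

theorem displacement_zero_right (z : ℝ) : displacement a b (z, 0) = 0 := by
  simp [displacement]

theorem contDiffAt_displacement : ContDiffAt ℝ n (displacement a b) 0 :=
  (((contDiffAt_phaseCoeff₁_fst a b).sqrt (phaseCoeff₁_fst_ne_zero a b)).mul contDiffAt_fst).mul
    contDiffAt_snd

theorem contDiffAt_liouvillePotential_fst :
    ContDiffAt ℝ n (fun p : ℝ × ℝ ↦ liouvillePotential a b p.1) 0 := by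
  have hm := contDiffAt_phaseCoeff₁_fst a b (n := n)
  have hne := phaseCoeff₁_fst_ne_zero a b
  unfold liouvillePotential phaseCoeff₂ phaseCoeff₃
  fun_prop (disch := simpa using hne)

theorem contDiffAt_reducedForce : ContDiffAt ℝ n (reducedForce a b c q r) 0 := by
  have hm := contDiffAt_phaseCoeff₁_fst a b (n := n)
  have hne := phaseCoeff₁_fst_ne_zero a b
  have hp := contDiffAt_displacement a b (n := n)
  have hp₀ : displacement a b 0 = 0 := displacement_zero_right a b 0
  have hne' : 1 + displacement a b 0 ≠ 0 := by simp [hp₀]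
  have hslope : ContDiffAt ℝ n (fun p ↦ rpowSlope q (displacement a b p)) 0 :=
    (hp₀ ▸ contDiffAt_rpowSlope q).comp 0 hp
  unfold reducedForce
  fun_prop (disch := assumption)

theorem contDiffAt_remainder : ContDiffAt ℝ n (remainder a b c q r) 0 := by
  have hm := contDiffAt_phaseCoeff₁_fst a b (n := n)
  have hne := phaseCoeff₁_fst_ne_zero a b
  have hpot := contDiffAt_liouvillePotential_fst a b (n := n)
  have hforce := contDiffAt_reducedForce a b c q r (n := n)
  have hsqrt : √(phaseCoeff₁ a b (0 : ℝ × ℝ).1) ≠ 0 := by simp [phaseCoeff₁_zero]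
  unfold remainder phaseCoeff₂
  fun_prop (disch := assumption)

variable {a b c q}

theorem hasDerivAt_remainder_right :
    HasDerivAt (fun y ↦ remainder a b c q r (0, y)) 0 0 := by
  have hremainder (y : ℝ) : remainder a b c q r (0, y) =
      c * q * y - (2 / q * (2 / q - 1 - 1) + c * Real.exp (y * q)) := by
    simp [remainder, reducedForce, displacement, phaseCoeff₁, phaseCoeff₂, rpowSlope_zero]
  refine ((((hasDerivAt_id (0 : ℝ)).const_mul (c * q)).sub
    ((((hasDerivAt_id (0 : ℝ)).mul_const q).exp.const_mul c).const_add _)).congr_deriv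
      (by simp)).congr_of_eventuallyEq (.of_forall hremainder)

theorem hasDerivAt_phaseCoeff₁_zero : HasDerivAt (phaseCoeff₁ a b) b 0 := by
  refine ((((hasDerivAt_id (0 : ℝ)).const_mul b).const_add 1).sub
    (((hasDerivAt_id (0 : ℝ)).pow 2).const_mul a)).congr_deriv (by simp)

theorem hasDerivAt_phaseCoeff₂_zero : HasDerivAt (phaseCoeff₂ a b) (-b) 0 := by
  refine ((((hasDerivAt_id (0 : ℝ)).const_mul b).const_sub 1).add
    (((hasDerivAt_id (0 : ℝ)).pow 2).const_mul (3 * a))).congr_deriv (by simp)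

theorem hasDerivAt_remainder_left (hq : q ≠ 0) (hq₁ : q ≠ 1) (hc : c = 4 * (q - 1) / q ^ 2)
    (ha : a = b * (3 * q - 2) / (q - 1)) :
    HasDerivAt (fun z ↦ remainder a b c q r (z, 0)) 0 0 := by
  have hremainder (z : ℝ) : remainder a b c q r (z, 0) =
      -((2 / q * (2 / q - 1 - phaseCoeff₂ a b z / phaseCoeff₁ a b z) +
        c * phaseCoeff₁ a b z ^ 2 * Real.exp (-(a * z))) / √(phaseCoeff₁ a b z)) := by
    simp [remainder, reducedForce, displacement_zero_right]
  have hm := hasDerivAt_phaseCoeff₁_zero (a := a) (b := b)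
  have hn := hasDerivAt_phaseCoeff₂_zero (a := a) (b := b)
  have hm₀ : phaseCoeff₁ a b 0 = 1 := phaseCoeff₁_zero a b
  have hn₀ : phaseCoeff₂ a b 0 = 1 := by simp [phaseCoeff₂]
  have hne : phaseCoeff₁ a b 0 ≠ 0 := by simp [hm₀]
  have hexp := ((hasDerivAt_id (0 : ℝ)).const_mul a).neg.exp
  refine ((((((hn.div hm hne).const_sub (2 / q - 1)).const_mul (2 / q)).add
    (((hm.pow 2).const_mul c).mul hexp)).div (hm.sqrt hne) (by simp [hm₀])).neg.congr_deriv
      ?_).congr_of_eventuallyEq (.of_forall hremainder)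
  have := sub_ne_zero.2 hq₁
  simp only [Pi.add_apply, Pi.mul_apply, Pi.div_apply, Pi.pow_apply, Pi.neg_apply, id, hm₀, hn₀,
    Nat.add_one_sub_one, Real.sqrt_one, mul_zero, neg_zero, Real.exp_zero]
  rw [ha, hc]
  field_simp
  ring

theorem remainder_zero (hq : q ≠ 0) (hc : c = 4 * (q - 1) / q ^ 2) :
    remainder a b c q r 0 = 0 := by
  simp only [remainder, hc, Prod.snd_zero, mul_zero, Prod.fst_zero, zero_mul, sub_self,
    phaseCoeff₂, sub_zero, ne_eq, OfNat.ofNat_ne_zero, not_false_eq_true, zero_pow, add_zero,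
    phaseCoeff₁, one_ne_zero, div_self, reducedForce, one_pow, mul_one, neg_zero, Real.exp_zero,
    displacement, Real.sqrt_one, Real.one_rpow, div_one, zero_sub, neg_add_rev]
  field_simp
  ring

theorem fderiv_remainder (hq : q ≠ 0) (hq₁ : q ≠ 1) (hc : c = 4 * (q - 1) / q ^ 2)
    (ha : a = b * (3 * q - 2) / (q - 1)) : fderiv ℝ (remainder a b c q r) 0 = 0 :=
  fderiv_prod_eq_zero
    ((contDiffAt_remainder a b c q r (n := 1)).differentiableAt one_ne_zero)
    (hasDerivAt_remainder_left r hq hq₁ hc ha) (hasDerivAt_remainder_right r)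

end Remainder

section Profile

variable {a b c q r x y : ℝ}

theorem exp_neg_two_mul_phase (hc : 0 < c) (hx : 0 < x) :
    Real.exp (-2 * phase a b c x) =
      c * Real.exp (-(a * (x ^ 2)⁻¹)) * x ^ (-2 * b) * Real.exp (-x ^ 2) := by
  nth_rw 2 [← Real.exp_log hc]
  rw [Real.rpow_def_of_pos hx, ← Real.exp_add, ← Real.exp_add, ← Real.exp_add, phase]
  ring_nf

theorem nonlinearity_eq_mul_reducedForce (hq : q ≠ 0) (hc : 0 < c) (hb : b = (2 * q + r - 1) / q)
    (hx : 0 < x) (hy : 0 < 1 + displacement a b ((x ^ 2)⁻¹, y)) :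
    (x * phaseCoeff₁ a b (x ^ 2)⁻¹) ^ 2 * (Real.exp (-2 * phase a b c x) *
      ((x ^ (2 / q) * (1 + displacement a b ((x ^ 2)⁻¹, y))) ^ r *
        Real.exp ((x ^ (2 / q) * (1 + displacement a b ((x ^ 2)⁻¹, y))) ^ q))) =
      x ^ (2 / q) * (x ^ 2)⁻¹ * reducedForce a b c q r ((x ^ 2)⁻¹, y) := by
  have hexponent : (x ^ (2 / q) * (1 + displacement a b ((x ^ 2)⁻¹, y))) ^ q =
      x ^ 2 + √(phaseCoeff₁ a b (x ^ 2)⁻¹) * y *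
        rpowSlope q (displacement a b ((x ^ 2)⁻¹, y)) := by
    rw [Real.mul_rpow (by positivity) hy.le, ← Real.rpow_mul hx.le, div_mul_cancel₀ _ hq,
      one_add_rpow_eq, Real.rpow_two]
    nth_rw 1 [displacement]
    field_simp
  have hpower : x ^ 2 * x ^ (-2 * b) * (x ^ (2 / q)) ^ r = x ^ (2 / q) * (x ^ 2)⁻¹ := by
    rw [← Real.rpow_mul hx.le, ← Real.rpow_two, ← Real.rpow_neg hx.le, ← Real.rpow_add hx,
      ← Real.rpow_add hx, ← Real.rpow_add hx, hb]
    congr 1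
    field_simp
    ring
  have hexp : Real.exp (-x ^ 2) * Real.exp (x ^ 2) = 1 := by rw [← Real.exp_add]; simp
  rw [hexponent, Real.mul_rpow (by positivity) hy.le, exp_neg_two_mul_phase hc hx, Real.exp_add,
    ← hpower, reducedForce]
  linear_combination (x ^ 2 * x ^ (-2 * b) * (x ^ (2 / q)) ^ r *
    (c * phaseCoeff₁ a b (x ^ 2)⁻¹ ^ 2 * Real.exp (-(a * (x ^ 2)⁻¹)) *
      (1 + displacement a b ((x ^ 2)⁻¹, y)) ^ r * Real.exp (√(phaseCoeff₁ a b (x ^ 2)⁻¹) * y *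
        rpowSlope q (displacement a b ((x ^ 2)⁻¹, y))))) * hexp

theorem sqrt_mul_rpow (hx : 0 < x) (β : ℝ) : √x * x ^ (β - 5 / 2) = x ^ β * (x ^ 2)⁻¹ := by
  rw [Real.sqrt_eq_rpow, ← Real.rpow_two, ← Real.rpow_neg hx.le, ← Real.rpow_add hx,
    ← Real.rpow_add hx]
  ring_nf

theorem rpow_add_sqrt_mul_eq (hx : 0 < x) :
    x ^ (2 / q) + √(x * phaseCoeff₁ a b (x ^ 2)⁻¹) * (x ^ (2 / q - 5 / 2) * y) =
      x ^ (2 / q) * (1 + displacement a b ((x ^ 2)⁻¹, y)) := by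
  rw [Real.sqrt_mul hx.le, displacement]
  linear_combination (√(phaseCoeff₁ a b (x ^ 2)⁻¹) * y) * sqrt_mul_rpow hx (2 / q)

theorem liouville_forcing_eq (hx : 0 < x) (hm : 0 < phaseCoeff₁ a b (x ^ 2)⁻¹) :
    2 / q * ((2 / q - 1) * x ^ (2 / q - 1 - 1)) -
        phaseCoeff₂ a b (x ^ 2)⁻¹ / (x * phaseCoeff₁ a b (x ^ 2)⁻¹) *
          (2 / q * x ^ (2 / q - 1)) +
        √(x * phaseCoeff₁ a b (x ^ 2)⁻¹) *
          (x ^ (2 / q - 5 / 2) * remainder a b c q r ((x ^ 2)⁻¹, y) -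
              c * q * (x ^ (2 / q - 5 / 2) * y) +
            (x⁻¹ * phaseCoeff₃ a b (x ^ 2)⁻¹ / (2 * (x * phaseCoeff₁ a b (x ^ 2)⁻¹)) -
                3 / 4 * (phaseCoeff₂ a b (x ^ 2)⁻¹ / (x * phaseCoeff₁ a b (x ^ 2)⁻¹)) ^ 2) *
              (x ^ (2 / q - 5 / 2) * y)) =
      -(x ^ (2 / q) * (x ^ 2)⁻¹ * reducedForce a b c q r ((x ^ 2)⁻¹, y)) := by
  have hsqrt : √(phaseCoeff₁ a b (x ^ 2)⁻¹) ≠ 0 := (Real.sqrt_pos.2 hm).ne'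
  have hpotential : x⁻¹ * phaseCoeff₃ a b (x ^ 2)⁻¹ / (2 * (x * phaseCoeff₁ a b (x ^ 2)⁻¹)) -
      3 / 4 * (phaseCoeff₂ a b (x ^ 2)⁻¹ / (x * phaseCoeff₁ a b (x ^ 2)⁻¹)) ^ 2 =
      (x ^ 2)⁻¹ * liouvillePotential a b (x ^ 2)⁻¹ := by
    rw [liouvillePotential]
    field_simp
  have hbracket : √(phaseCoeff₁ a b (x ^ 2)⁻¹) * (remainder a b c q r ((x ^ 2)⁻¹, y) -
      c * q * y + (x ^ 2)⁻¹ * liouvillePotential a b (x ^ 2)⁻¹ * y) =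
      -(2 / q * (2 / q - 1 - phaseCoeff₂ a b (x ^ 2)⁻¹ / phaseCoeff₁ a b (x ^ 2)⁻¹) +
        reducedForce a b c q r ((x ^ 2)⁻¹, y)) := by
    rw [remainder]
    linear_combination
      -(2 / q * (2 / q - 1 - phaseCoeff₂ a b (x ^ 2)⁻¹ / phaseCoeff₁ a b (x ^ 2)⁻¹) +
        reducedForce a b c q r ((x ^ 2)⁻¹, y)) * mul_inv_cancel₀ hsqrt
  rw [hpotential, Real.sqrt_mul hx.le, Real.rpow_sub_one hx.ne', Real.rpow_sub_one hx.ne']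
  linear_combination (√x * x ^ (2 / q - 5 / 2)) * hbracket -
    (2 / q * (2 / q - 1 - phaseCoeff₂ a b (x ^ 2)⁻¹ / phaseCoeff₁ a b (x ^ 2)⁻¹) +
        reducedForce a b c q r ((x ^ 2)⁻¹, y)) * sqrt_mul_rpow hx (2 / q)

/-- The Liouville substitution: the function `x ^ (2 / q) + √P * v` with `P` the derivative of
`phase a b c`. -/
noncomputable def profile (a b q : ℝ) (v : ℝ → ℝ) (x : ℝ) : ℝ :=
  x ^ (2 / q) + √(x * phaseCoeff₁ a b (x ^ 2)⁻¹) * v x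

/-- The derivative of `profile a b q v`, where `v₁` is the derivative of `v`. -/
noncomputable def profileDeriv (a b q : ℝ) (v v₁ : ℝ → ℝ) (x : ℝ) : ℝ :=
  2 / q * x ^ (2 / q - 1) +
    (phaseCoeff₂ a b (x ^ 2)⁻¹ / (2 * √(x * phaseCoeff₁ a b (x ^ 2)⁻¹)) * v x +
      √(x * phaseCoeff₁ a b (x ^ 2)⁻¹) * v₁ x)

variable {v v₁ : ℝ → ℝ}

theorem hasDerivAt_profile (hx : 0 < x) (hm : 0 < phaseCoeff₁ a b (x ^ 2)⁻¹)
    (hv : HasDerivAt v (v₁ x) x) :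
    HasDerivAt (profile a b q v) (profileDeriv a b q v v₁ x) x :=
  hasDerivAt_add_sqrt_mul (Real.hasDerivAt_rpow_const (.inl hx.ne'))
    (hasDerivAt_mul_phaseCoeff₁ a b hx.ne') hv (by positivity)

theorem profile_eq_mul_one_add_displacement (hx : 0 < x) :
    profile a b q v x =
      x ^ (2 / q) * (1 + displacement a b ((x ^ 2)⁻¹, x ^ (-(2 / q - 5 / 2)) * v x)) := by
  rw [← rpow_add_sqrt_mul_eq hx, profile, ← mul_assoc (x ^ (2 / q - 5 / 2)), ← Real.rpow_add hx,
    add_neg_cancel, Real.rpow_zero, one_mul]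

theorem hasDerivAt_profileDeriv (hq : q ≠ 0) (hc : 0 < c) (hb : b = (2 * q + r - 1) / q)
    (hx : 0 < x) (hm : 0 < phaseCoeff₁ a b (x ^ 2)⁻¹)
    (hpos : 0 < 1 + displacement a b ((x ^ 2)⁻¹, x ^ (-(2 / q - 5 / 2)) * v x))
    (hv : HasDerivAt v (v₁ x) x)
    (hv₁ : HasDerivAt v₁
      (scaledForce (remainder a b c q r) (2 / q - 5 / 2) x (v x) - c * q * v x) x) :
    HasDerivAt (profileDeriv a b q v v₁)
      (phaseCoeff₂ a b (x ^ 2)⁻¹ / (x * phaseCoeff₁ a b (x ^ 2)⁻¹) * profileDeriv a b q v v₁ x -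
        (x * phaseCoeff₁ a b (x ^ 2)⁻¹) ^ 2 * (Real.exp (-2 * phase a b c x) *
          (profile a b q v x ^ r * Real.exp (profile a b q v x ^ q)))) x := by
  have hv_eq : v x = x ^ (2 / q - 5 / 2) * (x ^ (-(2 / q - 5 / 2)) * v x) := by
    rw [← mul_assoc, ← Real.rpow_add hx, add_neg_cancel, Real.rpow_zero, one_mul]
  have hforcing := liouville_forcing_eq (c := c) (q := q) (r := r)
    (y := x ^ (-(2 / q - 5 / 2)) * v x) hx hm
  rw [← hv_eq] at hforcing
  refine (hasDerivAt_deriv_add_sqrt_mul (P := fun x ↦ x * phaseCoeff₁ a b (x ^ 2)⁻¹)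
    ((Real.hasDerivAt_rpow_const (.inl hx.ne')).const_mul (2 / q))
    (hasDerivAt_mul_phaseCoeff₁ a b hx.ne') (hasDerivAt_phaseCoeff₂ a b hx.ne') hv hv₁
    (mul_pos hx hm)).congr_deriv ?_
  rw [scaledForce, hforcing, profile_eq_mul_one_add_displacement hx,
    nonlinearity_eq_mul_reducedForce hq hc hb hx hpos, ← sub_eq_add_neg, profileDeriv]

theorem tendsto_phaseCoeff₁ (a b : ℝ) :
    Tendsto (fun x : ℝ ↦ phaseCoeff₁ a b (x ^ 2)⁻¹) atTop (𝓝 1) := by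
  have hcont : Continuous (phaseCoeff₁ a b) := by unfold phaseCoeff₁; fun_prop
  exact (hcont.tendsto' 0 1 (phaseCoeff₁_zero a b)).comp
    (tendsto_inv_atTop_zero.comp (tendsto_pow_atTop two_ne_zero))

theorem isBigO_displacement {η : ℝ → ℝ} (hη : η =O[atTop] fun x ↦ (x ^ 2)⁻¹) :
    (fun x ↦ displacement a b ((x ^ 2)⁻¹, η x)) =O[atTop] fun x ↦ (x ^ 4)⁻¹ :=
  (((tendsto_phaseCoeff₁ a b).sqrt.isBigO_one ℝ |>.mul
    (Asymptotics.isBigO_refl (fun x : ℝ ↦ (x ^ 2)⁻¹) atTop)).mul hη).congr_right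
      fun x ↦ by rw [one_mul, ← mul_inv, ← pow_add]

theorem exists_profile (hq : 1 < q) (ha : a = b * (3 * q - 2) / (q - 1))
    (hb : b = (2 * q + r - 1) / q) (hc : c = 4 * (q - 1) / q ^ 2) :
    ∃ W W₁ : ℝ → ℝ,
      (∀ᶠ x in atTop, HasDerivAt W (W₁ x) x ∧ HasDerivAt W₁
        (phaseCoeff₂ a b (x ^ 2)⁻¹ / (x * phaseCoeff₁ a b (x ^ 2)⁻¹) * W₁ x -
          (x * phaseCoeff₁ a b (x ^ 2)⁻¹) ^ 2 * (Real.exp (-2 * phase a b c x) *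
            (W x ^ r * Real.exp (W x ^ q)))) x) ∧
      (fun x ↦ W x - x ^ (2 / q)) =O[atTop] fun x ↦ x ^ (2 / q) * (x ^ 4)⁻¹ := by
  have hq₀ : 0 < q := by linarith
  have hc₀ : 0 < c := by have := sub_pos.2 hq; rw [hc]; positivity
  have hα : 2 / q - 5 / 2 < 3 := by
    have : 2 / q < 2 := by rw [div_lt_iff₀ hq₀]; linarith
    linarith
  obtain ⟨v, v₁, hv⟩ := exists_perturbed_oscillator_solution (α := 2 / q - 5 / 2)
    (Real.sqrt_pos.2 (mul_pos hc₀ hq₀)) hα (contDiffAt_remainder a b c q r)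
    (remainder_zero r hq₀.ne' hc) (fderiv_remainder r hq₀.ne' hq.ne' hc ha)
  rw [Real.sq_sqrt (mul_pos hc₀ hq₀).le] at hv
  have hη : (fun x ↦ x ^ (-(2 / q - 5 / 2)) * v x) =O[atTop] fun x ↦ (x ^ 2)⁻¹ := by
    refine .of_bound 1 ?_
    filter_upwards [hv, eventually_gt_atTop 0] with x ⟨_, _, hle⟩ hx
    simpa using (norm_prod_le_iff.1 (norm_inv_sq_rpow_mul_le hx hle)).2
  have hdisp := isBigO_displacement (a := a) (b := b) hη
  have hdisp₀ : Tendsto (fun x ↦ displacement a b ((x ^ 2)⁻¹, x ^ (-(2 / q - 5 / 2)) * v x)) atTop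
      (𝓝 0) :=
    hdisp.trans_tendsto (tendsto_inv_atTop_zero.comp (tendsto_pow_atTop four_ne_zero))
  refine ⟨profile a b q v, profileDeriv a b q v v₁, ?_, ?_⟩
  · filter_upwards [hv, eventually_gt_atTop 0,
      (tendsto_phaseCoeff₁ a b).eventually_const_lt one_pos,
      hdisp₀.eventually_const_lt neg_one_lt_zero] with x ⟨hvx, hv₁x, _⟩ hx hm hpos
    exact ⟨hasDerivAt_profile hx hm hvx,
      hasDerivAt_profileDeriv hq₀.ne' hc₀ hb hx hm (neg_lt_iff_pos_add'.1 hpos) hvx hv₁x⟩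
  · refine ((Asymptotics.isBigO_refl (fun x : ℝ ↦ x ^ (2 / q)) atTop).mul hdisp).congr' ?_ .rfl
    filter_upwards [eventually_gt_atTop 0] with x hx
    rw [profile_eq_mul_one_add_displacement hx]
    ring

end Profile

section Asymptotics

open Asymptotics

theorem isBigO_sub_of_hasDerivAt {α : Type*} {l : Filter α} {f g : α → ℝ} {φ : ℝ → ℝ} {φ' x₀ : ℝ}
    (hφ : HasDerivAt φ φ' x₀) (hf : (fun t ↦ f t - x₀) =O[l] g) (hg : Tendsto g l (𝓝 0)) :
    (fun t ↦ φ (f t) - φ x₀) =O[l] g := by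
  have hlim : Tendsto f l (𝓝 x₀) := by simpa using (hf.trans_tendsto hg).add_const x₀
  exact (hφ.isBigO_sub.comp_tendsto hlim).trans hf

theorem isBigO_rpow_sub_rpow {α : Type*} {l : Filter α} {f g δ : α → ℝ} (p : ℝ)
    (hg : ∀ᶠ t in l, 0 < g t) (hfg : (fun t ↦ f t - g t) =O[l] fun t ↦ g t * δ t)
    (hδ : Tendsto δ l (𝓝 0)) :
    (fun t ↦ f t ^ p - g t ^ p) =O[l] fun t ↦ g t ^ p * δ t := by
  have hquot : (fun t ↦ f t / g t - 1) =O[l] δ := by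
    refine ((isBigO_refl (fun t ↦ (g t)⁻¹) l).mul hfg).congr' ?_ ?_ <;>
      filter_upwards [hg] with t ht <;> field_simp
  have hquot₀ : Tendsto (fun t ↦ f t / g t) l (𝓝 1) := by
    simpa using (hquot.trans_tendsto hδ).add_const 1
  refine ((isBigO_refl (fun t ↦ g t ^ p) l).mul (isBigO_sub_of_hasDerivAt
    (Real.hasDerivAt_rpow_const (p := p) (.inl one_ne_zero)) hquot hδ)).congr' ?_ .rfl
  filter_upwards [hg, hquot₀.eventually_const_lt one_pos] with t ht hpos
  rw [Real.one_rpow, mul_sub, mul_one, ← Real.mul_rpow ht.le hpos.le, mul_div_cancel₀ _ ht.ne']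

theorem tendsto_log_div_pow_atTop {n : ℕ} (hn : n ≠ 0) :
    Tendsto (fun x ↦ Real.log x / x ^ n) atTop (𝓝 0) := by
  simpa using (isLittleO_log_rpow_atTop (r := n) (by positivity)).tendsto_div_nhds_zero

variable {a b c : ℝ}

theorem isBigO_two_mul_phase_sub_sq :
    (fun x ↦ 2 * phase a b c x - x ^ 2) =O[atTop] Real.log := by
  have hinv : (fun x : ℝ ↦ a * (x ^ 2)⁻¹) =O[atTop] Real.log :=
    ((tendsto_inv_atTop_zero.comp (tendsto_pow_atTop two_ne_zero)).const_mul a |>.isBigO_one ℝ)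
      |>.trans Real.isLittleO_const_log_atTop.isBigO
  refine ((((isBigO_refl Real.log atTop).const_mul_left (2 * b)).add
    (Real.isLittleO_const_log_atTop (c := -Real.log c)).isBigO).add hinv).congr_left fun x ↦ ?_
  rw [phase]
  ring

theorem isBigO_two_mul_phase_div_sq_sub_one :
    (fun x ↦ 2 * phase a b c x / x ^ 2 - 1) =O[atTop] fun x ↦ Real.log x / x ^ 2 := by
  refine ((isBigO_two_mul_phase_sub_sq (a := a) (b := b) (c := c)).mul
    (isBigO_refl (fun x : ℝ ↦ (x ^ 2)⁻¹) atTop)).congr' ?_ (.of_forall fun x ↦ rfl)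
  filter_upwards [eventually_ne_atTop 0] with x hx
  field_simp

theorem tendsto_phase_div_sq : Tendsto (fun x ↦ phase a b c x / x ^ 2) atTop (𝓝 (1 / 2)) := by
  have h := (isBigO_two_mul_phase_div_sq_sub_one (a := a) (b := b) (c := c)).trans_tendsto
    (tendsto_log_div_pow_atTop two_ne_zero)
  refine ((h.add_const 1).div_const 2).congr' ?_ |>.trans (by simp)
  filter_upwards with x
  ring

theorem eventually_phase_mem_Icc : ∀ᶠ x in atTop, phase a b c x ∈ Set.Icc x (x ^ 2) := by
  have h := tendsto_phase_div_sq (a := a) (b := b) (c := c)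
  filter_upwards [h.eventually_const_lt (show (1 / 4 : ℝ) < 1 / 2 by norm_num),
    h.eventually_lt_const (show (1 / 2 : ℝ) < 1 by norm_num), eventually_ge_atTop 4]
    with x hlower hupper hx
  have hsq : 0 < x ^ 2 := by positivity
  rw [lt_div_iff₀ hsq] at hlower
  rw [div_lt_one hsq] at hupper
  exact ⟨by nlinarith, hupper.le⟩

theorem tendsto_phase_atTop : Tendsto (phase a b c) atTop atTop :=
  tendsto_atTop_mono' _ (eventually_phase_mem_Icc.mono fun _ hx ↦ hx.1) tendsto_id

theorem isBigO_radicand_sub_sq :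
    (fun x ↦ 2 * phase a b c x - b * Real.log (2 * phase a b c x) + Real.log c - x ^ 2) =O[atTop]
      fun x ↦ x ^ 2 * (Real.log x / x ^ 4) := by
  have hinv : (fun x : ℝ ↦ (x ^ 2)⁻¹) =O[atTop] fun x ↦ Real.log x / x ^ 2 :=
    ((Real.isLittleO_const_log_atTop (c := 1)).isBigO.mul
      (isBigO_refl (fun x : ℝ ↦ (x ^ 2)⁻¹) atTop)).congr_left fun x ↦ one_mul _
  have hlog : (fun x ↦ Real.log (2 * phase a b c x / x ^ 2)) =O[atTop]
      fun x ↦ Real.log x / x ^ 2 := by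
    simpa using isBigO_sub_of_hasDerivAt (Real.hasDerivAt_log one_ne_zero)
      (isBigO_two_mul_phase_div_sq_sub_one (a := a) (b := b) (c := c))
      (tendsto_log_div_pow_atTop two_ne_zero)
  refine ((hinv.const_mul_left a).sub (hlog.const_mul_left b)).congr' ?_ ?_
  · filter_upwards [eventually_gt_atTop 0, tendsto_phase_atTop.eventually_gt_atTop 0] with x hx hS
    rw [Real.log_div (by positivity) (by positivity), Real.log_pow, phase]
    push_cast
    ring
  · filter_upwards [eventually_ne_atTop 0] with x hx
    field_simp

theorem isBigO_rpow_log_phase {p : ℝ} (hp : 0 ≤ 2 - p) :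
    (fun x ↦ (x ^ 2) ^ p * (Real.log x / x ^ 4)) =O[atTop]
      fun x ↦ Real.log (phase a b c x) / phase a b c x ^ (2 - p) := by
  refine .of_bound 1 ?_
  filter_upwards [eventually_phase_mem_Icc (a := a) (b := b) (c := c), eventually_ge_atTop 1]
    with x ⟨hlower, hupper⟩ hx
  have hlog : 0 ≤ Real.log x := Real.log_nonneg hx
  have hS : 0 < phase a b c x := by linarith
  have hlog_le : Real.log x ≤ Real.log (phase a b c x) := by gcongr
  have hlogS : 0 ≤ Real.log (phase a b c x) := hlog.trans hlog_le
  have hpow : (x ^ 2) ^ p * (Real.log x / x ^ 4) = Real.log x / (x ^ 2) ^ (2 - p) := by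
    rw [Real.rpow_sub (by positivity), Real.rpow_two, ← pow_mul]
    field_simp
    ring
  rw [hpow, one_mul, Real.norm_of_nonneg (by positivity),
    Real.norm_of_nonneg (by positivity)]
  gcongr

theorem isBigO_profile_sub {W : ℝ → ℝ} {p : ℝ} (hp : 0 ≤ 2 - p)
    (hW : (fun x ↦ W x - (x ^ 2) ^ p) =O[atTop] fun x ↦ (x ^ 2) ^ p * (x ^ 4)⁻¹) :
    (fun x ↦ W x - (2 * phase a b c x - b * Real.log (2 * phase a b c x) + Real.log c) ^ p)
      =O[atTop] fun x ↦ Real.log (phase a b c x) / phase a b c x ^ (2 - p) := by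
  have hinv : (fun x : ℝ ↦ (x ^ 4)⁻¹) =O[atTop] fun x ↦ Real.log x / x ^ 4 :=
    ((Real.isLittleO_const_log_atTop (c := 1)).isBigO.mul
      (isBigO_refl (fun x : ℝ ↦ (x ^ 4)⁻¹) atTop)).congr_left fun x ↦ one_mul _
  have hradicand := isBigO_rpow_sub_rpow p
    ((eventually_gt_atTop (0 : ℝ)).mono fun x hx ↦ pow_pos hx 2)
    (isBigO_radicand_sub_sq (a := a) (b := b) (c := c)) (tendsto_log_div_pow_atTop four_ne_zero)
  exact ((hW.trans ((isBigO_refl _ _).mul hinv)).sub hradicand).congr_left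
    (fun x ↦ by ring) |>.trans (isBigO_rpow_log_phase hp)

end Asymptotics

section ChangeOfVariables

open Set

theorem exists_rightInverse_of_strictMonoOn {f : ℝ → ℝ} {a : ℝ} (hmono : StrictMonoOn f (Ici a))
    (hcont : ContinuousOn f (Ici a)) (hlim : Tendsto f atTop atTop) :
    ∃ g : ℝ → ℝ, Tendsto g atTop atTop ∧ ∀ y > f a, f (g y) = y ∧ ContinuousAt g y := by
  have hsurj : SurjOn f (Ici a) (Ici (f a)) := intermediate_value_Ici hcont hlim
  set g := Function.invFunOn f (Ici a)
  have hmaps : MapsTo g (Ici (f a)) (Ici a) := hsurj.mapsTo_invFunOn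
  have hright : RightInvOn g f (Ici (f a)) := hsurj.rightInvOn_invFunOn
  have hlt {x y : ℝ} (hx : x ∈ Ici a) (hy : y ∈ Ici (f a)) : f x < y ↔ x < g y := by
    rw [← hmono.lt_iff_lt hx (hmaps hy), hright hy]
  have hgmono : StrictMonoOn g (Ici (f a)) := fun y hy z hz hyz ↦
    (hlt (hmaps hy) hz).1 (by rwa [hright hy])
  have himage : Ici a ⊆ g '' Ici (f a) := fun x hx ↦
    ⟨f x, hmono.monotoneOn self_mem_Ici hx hx, hmono.injOn.leftInvOn_invFunOn hx⟩
  refine ⟨g, tendsto_atTop.2 fun M ↦ ?_, fun y hy ↦ ⟨hright hy.le, ?_⟩⟩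
  · filter_upwards [eventually_ge_atTop (f a), eventually_gt_atTop (f (max a M))] with y hy hM
    exact (le_max_right a M).trans ((hlt (le_max_left a M) hy).1 hM).le
  · exact hgmono.continuousAt_of_image_mem_nhds (Ici_mem_nhds hy)
      (mem_of_superset (Ici_mem_nhds ((hlt self_mem_Ici hy.le).1 hy)) himage)

variable {f S P P₁ W W₁ σ w w₁ : ℝ → ℝ}

theorem exists_rightInverse_of_hasDerivAt (hlim : Tendsto S atTop atTop)
    (hS : ∀ᶠ x in atTop, HasDerivAt S (P x) x) (hP : ∀ᶠ x in atTop, 0 < P x) :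
    ∃ σ : ℝ → ℝ, Tendsto σ atTop atTop ∧
      ∀ᶠ s in atTop, S (σ s) = s ∧ HasDerivAt σ (P (σ s))⁻¹ s := by
  obtain ⟨a, ha⟩ := eventually_atTop.1 (hS.and hP)
  have hcont : ContinuousOn S (Ici a) := fun x hx ↦
    (ha x hx).1.continuousAt.continuousWithinAt
  have hmono : StrictMonoOn S (Ici a) := strictMonoOn_of_deriv_pos (convex_Ici a) hcont fun x hx ↦
    (ha x (interior_subset hx)).1.deriv ▸ (ha x (interior_subset hx)).2
  obtain ⟨σ, hσ, hinv⟩ := exists_rightInverse_of_strictMonoOn hmono hcont hlim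
  refine ⟨σ, hσ, ?_⟩
  filter_upwards [eventually_gt_atTop (S a), hσ.eventually_ge_atTop a] with s hs hσs
  exact ⟨(hinv s hs).1, (ha _ hσs).1.of_local_left_inverse (hinv s hs).2 (ha _ hσs).2.ne'
    ((eventually_gt_nhds hs).mono fun y hy ↦ (hinv y hy).1)⟩

theorem hasDerivAt_div_comp_rightInverse {N s : ℝ} (hσ : HasDerivAt σ (P (σ s))⁻¹ s)
    (hPpos : 0 < P (σ s)) (hP : HasDerivAt P (P₁ (σ s)) (σ s))
    (hW₁ : HasDerivAt W₁ (P₁ (σ s) / P (σ s) * W₁ (σ s) - P (σ s) ^ 2 * N) (σ s)) :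
    HasDerivAt (fun s ↦ W₁ (σ s) / P (σ s)) (-N) s := by
  refine ((hW₁.comp s hσ).div (hP.comp s hσ) hPpos.ne').congr_deriv ?_
  simp only [Function.comp]
  field_simp
  ring

theorem hasDerivAt_comp_neg_log {w' t : ℝ} (ht : t ≠ 0) (hw : HasDerivAt w w' (-Real.log t)) :
    HasDerivAt (fun t ↦ w (-Real.log t)) (-w' / t) t :=
  (hw.comp t (Real.hasDerivAt_log ht).neg).congr_deriv (by ring)

theorem hasDerivAt_neg_comp_neg_log_div {N t : ℝ} (ht : 0 < t)
    (hw₁ : HasDerivAt w₁ (-(Real.exp (-2 * -Real.log t) * N)) (-Real.log t)) :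
    HasDerivAt (fun t ↦ -w₁ (-Real.log t) / t) (-(-w₁ (-Real.log t) / t / t) - N) t := by
  have hexp : Real.exp (-2 * -Real.log t) = t ^ 2 := by
    rw [neg_mul_neg, two_mul, Real.exp_add, Real.exp_log ht, sq]
  rw [hexp] at hw₁
  refine ((hasDerivAt_comp_neg_log ht.ne' hw₁).neg.div (hasDerivAt_id t) ht.ne').congr_deriv ?_
  simp only [id, Pi.neg_apply]
  field_simp
  ring

theorem tendsto_neg_log_nhdsGT_zero : Tendsto (fun t ↦ -Real.log t) (𝓝[>] 0) atTop :=
  tendsto_neg_atBot_atTop.comp Real.tendsto_log_nhdsGT_zero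

theorem exists_radial_solution_comp (hlim : Tendsto S atTop atTop)
    (hS : ∀ᶠ x in atTop, HasDerivAt S (P x) x) (hP : ∀ᶠ x in atTop, HasDerivAt P (P₁ x) x)
    (hPpos : ∀ᶠ x in atTop, 0 < P x)
    (hW : ∀ᶠ x in atTop, HasDerivAt W (W₁ x) x ∧ HasDerivAt W₁
      (P₁ x / P x * W₁ x - P x ^ 2 * (Real.exp (-2 * S x) * f (W x))) x) :
    ∃ τ u₁ : ℝ → ℝ, Tendsto τ (𝓝[>] 0) atTop ∧ ∀ᶠ t in 𝓝[>] 0, S (τ t) = -Real.log t ∧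
      HasDerivAt (fun t ↦ W (τ t)) (u₁ t) t ∧
      HasDerivAt u₁ (-(u₁ t / t) - f (W (τ t))) t := by
  obtain ⟨σ, hσ, hinv⟩ := exists_rightInverse_of_hasDerivAt hlim hS hPpos
  refine ⟨fun t ↦ σ (-Real.log t), fun t ↦ -(W₁ (σ (-Real.log t)) / P (σ (-Real.log t))) / t,
    hσ.comp tendsto_neg_log_nhdsGT_zero, ?_⟩
  filter_upwards [self_mem_nhdsWithin, tendsto_neg_log_nhdsGT_zero.eventually
    (hinv.and (hσ.eventually (hP.and (hPpos.and hW))))]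
    with t ht ⟨⟨hSσ, hσt⟩, hPt, hpos, hWt, hW₁t⟩
  rw [hSσ] at hW₁t
  refine ⟨hSσ, (hasDerivAt_comp_neg_log ht.ne' (hWt.comp _ hσt)).congr_deriv ?_,
    hasDerivAt_neg_comp_neg_log_div (w₁ := fun s ↦ W₁ (σ s) / P (σ s)) ht
      (hasDerivAt_div_comp_rightInverse hσt hpos hPt hW₁t)⟩
  rw [div_eq_mul_inv (W₁ _)]

end ChangeOfVariables

section Regularity

variable {𝕜 F : Type*} [NontriviallyNormedField 𝕜] [NormedAddCommGroup F] [NormedSpace 𝕜 F]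
  {u u₁ g : 𝕜 → F} {s : Set 𝕜}

theorem deriv_deriv_eq_of_hasDerivAt (hs : IsOpen s) (hu : ∀ t ∈ s, HasDerivAt u (u₁ t) t)
    (hu₁ : ∀ t ∈ s, HasDerivAt u₁ (g t) t) {t : 𝕜} (ht : t ∈ s) : deriv (deriv u) t = g t := by
  have hderiv : deriv u =ᶠ[𝓝 t] u₁ :=
    eventually_of_mem (hs.mem_nhds ht) fun x hx ↦ (hu x hx).deriv
  rw [hderiv.deriv_eq, (hu₁ t ht).deriv]

theorem contDiffOn_two_of_hasDerivAt (hs : IsOpen s) (hu : ∀ t ∈ s, HasDerivAt u (u₁ t) t)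
    (hu₁ : ∀ t ∈ s, HasDerivAt u₁ (g t) t) (hg : ContinuousOn g s) : ContDiffOn 𝕜 2 u s := by
  have hone : ContDiffOn 𝕜 1 u₁ s := (contDiffOn_succ_iff_deriv_of_isOpen (n := 0) hs).2
    ⟨fun t ht ↦ (hu₁ t ht).differentiableAt.differentiableWithinAt, by simp,
      contDiffOn_zero.2 (hg.congr fun t ht ↦ (hu₁ t ht).deriv)⟩
  exact (contDiffOn_succ_iff_deriv_of_isOpen (n := 1) hs).2
    ⟨fun t ht ↦ (hu t ht).differentiableAt.differentiableWithinAt, by simp,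
      hone.congr fun t ht ↦ (hu t ht).deriv⟩

end Regularity

theorem tendsto_atTop_of_isBigO_sub_rpow {W : ℝ → ℝ} {β : ℝ} (hβ : 0 < β)
    (hW : (fun x ↦ W x - x ^ β) =O[atTop] fun x ↦ x ^ β * (x ^ 4)⁻¹) :
    Tendsto W atTop atTop := by
  have hsmall : (fun x : ℝ ↦ (x ^ 4)⁻¹) =o[atTop] fun _ ↦ (1 : ℝ) :=
    (Asymptotics.isLittleO_one_iff ℝ).2
      (tendsto_inv_atTop_zero.comp (tendsto_pow_atTop four_ne_zero))
  have hequiv : Asymptotics.IsEquivalent atTop W fun x ↦ x ^ β :=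
    hW.trans_isLittleO (((Asymptotics.isBigO_refl (fun x : ℝ ↦ x ^ β) atTop).mul_isLittleO
      hsmall).congr_right fun x ↦ mul_one _)
  exact hequiv.symm.tendsto_atTop (tendsto_rpow_atTop hβ)

theorem exists_singular_solution {b c q r : ℝ} (hq : 1 < q) (hb : b = (2 * q + r - 1) / q)
    (hc : c = 4 * (q - 1) / q ^ 2) :
    ∃ u u₁ : ℝ → ℝ, Tendsto u (𝓝[>] 0) atTop ∧
      (∀ᶠ t in 𝓝[>] 0, HasDerivAt u (u₁ t) t ∧
        HasDerivAt u₁ (-(u₁ t / t) - u t ^ r * Real.exp (u t ^ q)) t) ∧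
      (fun t ↦ u t - (-2 * Real.log t - b * Real.log (-2 * Real.log t) + Real.log c) ^ (1 / q))
        =O[𝓝[>] 0]
        fun t ↦ Real.log (-Real.log t) / (-Real.log t) ^ (2 - 1 / q) := by
  obtain ⟨a, ha⟩ : ∃ a, a = b * (3 * q - 2) / (q - 1) := ⟨_, rfl⟩
  have hq₀ : 0 < q := by linarith
  have hexponent : 0 ≤ 2 - 1 / q := by
    have := (div_le_one hq₀).2 hq.le
    linarith
  obtain ⟨W, W₁, hW, hWO⟩ := exists_profile hq ha hb hc
  have hWlim : Tendsto W atTop atTop := tendsto_atTop_of_isBigO_sub_rpow (by positivity) hWO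
  have hpow : (fun x : ℝ ↦ x ^ (2 / q)) =ᶠ[atTop] fun x ↦ (x ^ 2) ^ (1 / q) := by
    filter_upwards [eventually_ge_atTop 0] with x hx
    rw [← Real.rpow_natCast_mul hx, Nat.cast_ofNat, mul_one_div]
  have hasymp := isBigO_profile_sub (a := a) (b := b) (c := c) hexponent
    (hWO.congr' (.sub .rfl hpow) (hpow.mul .rfl))
  obtain ⟨τ, u₁, hτ, hu⟩ := exists_radial_solution_comp (f := fun w ↦ w ^ r * Real.exp (w ^ q))
    (tendsto_phase_atTop (a := a) (b := b) (c := c))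
    ((eventually_ne_atTop 0).mono fun x hx ↦ hasDerivAt_phase a b c hx)
    ((eventually_ne_atTop 0).mono fun x hx ↦ hasDerivAt_mul_phaseCoeff₁ a b hx)
    (((eventually_gt_atTop 0).and ((tendsto_phaseCoeff₁ a b).eventually_const_lt one_pos)).mono
      fun x hx ↦ mul_pos hx.1 hx.2) hW
  refine ⟨fun t ↦ W (τ t), u₁, hWlim.comp hτ, hu.mono fun t ht ↦ ht.2,
    (hasymp.comp_tendsto hτ).congr' ?_ ?_⟩
  all_goals
    filter_upwards [hu] with t ⟨ht, _⟩
    simp only [Function.comp, ht, mul_neg, neg_mul]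

/-- Corollary 1.1: for `q > 1`, `r ∈ ℝ`, the radial equation
`u'' + u'/t + u^r e^{u^q} = 0` has a singular solution near the origin with the
asymptotic expansion
`u(t) = (−2 log t − ((2q+r−1)/q) log(−2 log t) + log(4(q−1)/q²))^{1/q}
  + O(log(−log t)/(−log t)^{2−1/q})`. -/
theorem stmt4 (q r : ℝ) (hq : 1 < q) :
    ∃ r₀ ∈ Set.Ioo (0 : ℝ) 1, ∃ C > (0 : ℝ), ∃ u : ℝ → ℝ,
      ContDiffOn ℝ 2 u (Set.Ioo 0 r₀) ∧
      (∀ t ∈ Set.Ioo (0 : ℝ) r₀, 0 < u t) ∧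
      (∀ t ∈ Set.Ioo (0 : ℝ) r₀,
        deriv (deriv u) t + deriv u t / t + (u t) ^ r * Real.exp ((u t) ^ q) = 0) ∧
      Tendsto u (nhdsWithin 0 (Set.Ioi 0)) atTop ∧
      ∀ t ∈ Set.Ioo (0 : ℝ) r₀,
        |u t - (-2 * Real.log t - ((2 * q + r - 1) / q) * Real.log (-2 * Real.log t)
            + Real.log (4 * (q - 1) / q ^ 2)) ^ (1 / q)|
          ≤ C * Real.log (-Real.log t) / (-Real.log t) ^ (2 - 1 / q) := by
  obtain ⟨u, u₁, hlim, hode, hasymp⟩ := exists_singular_solution (r := r) hq rfl rfl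
  obtain ⟨C, hC, hbound⟩ := hasymp.exists_pos
  have hlarge := tendsto_neg_log_nhdsGT_zero.eventually_ge_atTop 1
  obtain ⟨r₀, hr₀, hall⟩ := (mem_nhdsGT_iff_exists_mem_Ioc_Ioo_subset (u' := 1 / 2) (by norm_num)).1
    (hode.and ((hlim.eventually_gt_atTop 0).and (hbound.bound.and hlarge)))
  have hu (t) (ht : t ∈ Set.Ioo 0 r₀) := (hall ht).1.1
  have hu₁ (t) (ht : t ∈ Set.Ioo 0 r₀) := (hall ht).1.2
  have hpos (t) (ht : t ∈ Set.Ioo 0 r₀) : 0 < u t := (hall ht).2.1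
  have hrpow (p : ℝ) : ContinuousOn (fun t ↦ u t ^ p) (Set.Ioo 0 r₀) :=
    (HasDerivAt.continuousOn hu).rpow_const fun t ht ↦ .inl (hpos t ht).ne'
  refine ⟨r₀, ⟨hr₀.1, hr₀.2.trans_lt (by norm_num)⟩, C, hC, u,
    contDiffOn_two_of_hasDerivAt isOpen_Ioo hu hu₁ (((HasDerivAt.continuousOn hu₁).div
      continuousOn_id fun t ht ↦ ht.1.ne').neg.sub ((hrpow r).mul (hrpow q).rexp)),
    hpos, fun t ht ↦ ?_, hlim, fun t ht ↦ ?_⟩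
  · rw [deriv_deriv_eq_of_hasDerivAt isOpen_Ioo hu hu₁ ht, (hu t ht).deriv]
    ring
  · have hlog : 1 ≤ -Real.log t := (hall ht).2.2.2
    have hnonneg := div_nonneg (Real.log_nonneg hlog)
      (Real.rpow_nonneg (zero_le_one.trans hlog) (2 - 1 / q))
    simpa only [Real.norm_eq_abs, abs_of_nonneg hnonneg, mul_div_assoc] using (hall ht).2.2.1
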